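/- Let B_2 = {x ∈ ℝ² : ‖x‖ ≤ 1} be the closed unit ball in the Euclidean plane. Every continuous map f : B_2 → B_2 has a fixed point: there exists x ∈ B_2 with f(x) = x. -/

import Mathlib

/-!
By Tietze, extend the map to a continuous self-map `g` of `ℂ` taking values in the disc, so that the
two maps have the same fixed points. On a circle `‖z‖ = r` with `r > sup ‖g‖`, the difference
`z - g z` is within distance less than `‖z‖` of `z`, so `(z - g z) / z` lies in the slit plane and
has a continuous logarithm there. If `g` had no fixed point, `z - g z` would also have a continuous
logarithm, on all of the simply connected plane; subtracting the two would give a continuous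
logarithm of the identity on the circle, which the winding of the circle around `0` rules out.
-/

open Complex Metric Set Topology

theorem sub_eq_sub_of_exp_eq_exp {X : Type*} [TopologicalSpace X] [PreconnectedSpace X]
    {L M : X → ℂ} (hL : Continuous L) (hM : Continuous M) (h : ∀ x, exp (L x) = exp (M x))
    (x y : X) : L x - M x = L y - M y := by
  have exp_sub_eq_one (x : X) : exp (L x - M x) = 1 := by
    rw [exp_sub, h, div_self (exp_ne_zero _)]
  exact isCoveringMap_exp.const_of_comp (hL.sub hM)
    (fun x y ↦ Subtype.ext ((exp_sub_eq_one x).trans (exp_sub_eq_one y).symm)) x y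

theorem not_exists_continuousOn_exp_eq_id_sphere {r : ℝ} (hr : 0 < r) :
    ¬∃ L : ℂ → ℂ, ContinuousOn L (sphere 0 r) ∧ ∀ z ∈ sphere (0 : ℂ) r, exp (L z) = z := by
  rintro ⟨L, hL, hexp⟩
  have mem_sphere (t : ℝ) : circleMap 0 r t ∈ sphere (0 : ℂ) r := circleMap_mem_sphere 0 hr.le t
  have hL_circle : Continuous fun t ↦ L (circleMap 0 r t) :=
    hL.comp_continuous (continuous_circleMap 0 r) mem_sphere
  have exp_eq (t : ℝ) : exp (L (circleMap 0 r t)) = exp (Real.log r + t * I) := by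
    rw [hexp _ (mem_sphere t), circleMap_zero, exp_add, ← ofReal_exp, Real.exp_log hr]
  have h := sub_eq_sub_of_exp_eq_exp hL_circle (by fun_prop) exp_eq (2 * Real.pi) 0
  rw [(periodic_circleMap 0 r).eq, sub_right_inj, add_right_inj] at h
  simp [Real.pi_ne_zero] at h

theorem exists_eq_zero_of_forall_sphere_norm_sub_lt {U : Set ℂ} (hU : IsSimplyConnected U)
    (hUo : IsOpen U) {r : ℝ} (hr : 0 < r) (hrU : sphere 0 r ⊆ U) {h : ℂ → ℂ}
    (hh : ContinuousOn h U) (hlt : ∀ z ∈ sphere (0 : ℂ) r, ‖h z - z‖ < r) :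
    ∃ z ∈ U, h z = 0 := by
  by_contra! hne
  obtain ⟨L, hL, hexp⟩ := exists_continuousOn_eqOn_exp_comp hU hUo hh (by simpa using hne)
  have ne_zero (z : ℂ) (hz : z ∈ sphere (0 : ℂ) r) : z ≠ 0 := ne_of_mem_sphere hz hr.ne'
  have mem_slitPlane (z : ℂ) (hz : z ∈ sphere (0 : ℂ) r) : h z / z ∈ slitPlane := by
    have norm_lt : ‖(h z - z) / z‖ < 1 := by
      rw [norm_div, mem_sphere_zero_iff_norm.1 hz, div_lt_one hr]
      exact hlt z hz
    have eq_one_add : h z / z = 1 + (h z - z) / z := by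
      rw [sub_div, div_self (ne_zero z hz), add_sub_cancel]
    exact eq_one_add ▸ mem_slitPlane_of_norm_lt_one norm_lt
  refine not_exists_continuousOn_exp_eq_id_sphere hr ⟨fun z ↦ L z - log (h z / z), ?_, ?_⟩
  · exact (hL.mono hrU).sub (((hh.mono hrU).div continuousOn_id ne_zero).clog mem_slitPlane)
  · intro z hz
    rw [exp_sub, show exp (L z) = h z from hexp (hrU hz),
      exp_log (slitPlane_ne_zero (mem_slitPlane z hz)), div_div_cancel₀ (hne z (hrU hz))]

theorem isSimplyConnected_of_convex {E : Type*} [AddCommGroup E] [Module ℝ E] [TopologicalSpace E]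
    [ContinuousAdd E] [ContinuousSMul ℝ E] {s : Set E} (hs : Convex ℝ s) (hne : s.Nonempty) :
    IsSimplyConnected s :=
  have := hs.contractibleSpace hne
  SimplyConnectedSpace.ofContractible s

theorem exists_isFixedPt_of_isBounded_range {g : ℂ → ℂ} (hg : Continuous g)
    (hb : Bornology.IsBounded (range g)) : ∃ z, Function.IsFixedPt g z := by
  obtain ⟨r, hr, hgr⟩ := hb.subset_ball_lt 0 0
  have norm_lt (z : ℂ) : ‖g z‖ < r := mem_ball_zero_iff.1 (hgr (mem_range_self z))
  obtain ⟨z, -, hz⟩ := exists_eq_zero_of_forall_sphere_norm_sub_lt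
    (isSimplyConnected_of_convex convex_univ univ_nonempty) isOpen_univ hr (subset_univ _)
    (continuous_id.sub hg).continuousOn (fun z _ ↦ by simpa using norm_lt z)
  exact ⟨z, (sub_eq_zero.1 hz).symm⟩

theorem exists_isFixedPt_of_isEmbedding_complex {K : Type*} [TopologicalSpace K] [CompactSpace K]
    [TietzeExtension.{0} K] {e : K → ℂ} (he : IsEmbedding e) (f : C(K, K)) :
    ∃ x, Function.IsFixedPt f x := by
  have he_closed : IsClosedEmbedding e := he.continuous.isClosedEmbedding he.injective
  obtain ⟨F, hF⟩ := f.exists_extension' he_closed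
  have bounded : Bornology.IsBounded (range (e ∘ F)) :=
    (isCompact_range he.continuous).isBounded.subset (range_comp_subset_range F e)
  obtain ⟨z, hz⟩ := exists_isFixedPt_of_isBounded_range (he.continuous.comp F.continuous) bounded
  exact ⟨F z, (congrFun hF (F z)).symm.trans (congrArg F hz)⟩

theorem brouwer_dim_two_general {E : Type*} [AddCommGroup E] [Module ℝ E] [TopologicalSpace E]
    [IsTopologicalAddGroup E] [ContinuousSMul ℝ E] [T2Space E] (hE : Module.finrank ℝ E = 2)
    {K : Set E} (hK : IsCompact K) [TietzeExtension.{0} K] {f : E → E} (hf : ContinuousOn f K)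
    (hmaps : MapsTo f K K) : ∃ x ∈ K, f x = x := by
  have : FiniteDimensional ℝ E := .of_finrank_pos (by simp [hE])
  have : CompactSpace K := isCompact_iff_compactSpace.1 hK
  obtain ⟨e⟩ := FiniteDimensional.nonempty_continuousLinearEquiv_of_finrank_eq
    (hE.trans finrank_real_complex.symm)
  obtain ⟨x, hx⟩ := exists_isFixedPt_of_isEmbedding_complex
    (e.toHomeomorph.isEmbedding.comp .subtypeVal) ⟨_, hf.mapsToRestrict hmaps⟩
  exact ⟨x, x.2, congrArg Subtype.val hx⟩

/-- **Brouwer's Fixed Point Theorem for `n = 2`.** Every continuous map from the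
closed unit ball `B₂ ⊆ ℝ²` to itself has a fixed point. -/
theorem brouwer_dim_two (f : EuclideanSpace ℝ (Fin 2) → EuclideanSpace ℝ (Fin 2))
    (hf : ContinuousOn f (Metric.closedBall (0 : EuclideanSpace ℝ (Fin 2)) 1))
    (hmaps : Set.MapsTo f (Metric.closedBall (0 : EuclideanSpace ℝ (Fin 2)) 1)
      (Metric.closedBall (0 : EuclideanSpace ℝ (Fin 2)) 1)) :
    ∃ x ∈ Metric.closedBall (0 : EuclideanSpace ℝ (Fin 2)) 1, f x = x :=
  brouwer_dim_two_general finrank_euclideanSpace_fin (isCompact_closedBall 0 1) hf hmaps
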